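/- Let G be a DAG containing no active cycle, let X, Y, Z ⊆ V be disjoint sets such that Y ∪ Z has local relationships and TRAILS(X,Y,Z) ≠ ∅, and let T be a minimal element of TRAILS(X,Y,Z) with respect to <_TRAIL, with converging nodes c_1, …, c_C and C ≥ 1. If c_1 ∈ Z and c_{i+1} → c_i ∈ E for all i = 1, …, C−1, then c_i ∈ Z for all i = 1, …, C. -/

import Mathlib

open scoped Classical

/-- `E` is the arc relation of a (finite) directed acyclic graph: there are no
directed cycles (hence also no loops and no pairs of opposite arcs). -/
def IsDAG {V : Type*} (E : V → V → Prop) : Prop :=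
  ∀ v : V, ¬ Relation.TransGen E v v

/-- `d` is a descendant of `v`: there is a (nonempty) directed path from `v` to `d`. -/
def Desc {V : Type*} (E : V → V → Prop) (v d : V) : Prop :=
  Relation.TransGen E v d

/-- A trail: a sequence of `len + 1` pairwise distinct nodes
`f 0, f 1, …, f len`, consecutive ones joined by an arc of `E`
in one of the two possible directions.  Its length is `len`. -/
structure Trail (V : Type*) (E : V → V → Prop) where
  len : ℕ
  f : ℕ → V
  arcs : ∀ i, i < len → E (f i) (f (i + 1)) ∨ E (f (i + 1)) (f i)
  inj : ∀ i, i ≤ len → ∀ j, j ≤ len → f i = f j → i = j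

namespace Trail

variable {V : Type*} {E : V → V → Prop}

/-- The trail has a converging connection at the interior index `i`:
`f (i-1) → f i ← f (i+1)`. -/
def ConvAt (T : Trail V E) (i : ℕ) : Prop :=
  0 < i ∧ i < T.len ∧ E (T.f (i - 1)) (T.f i) ∧ E (T.f (i + 1)) (T.f i)

/-- The trail is activated by `Z`: every interior converging node is in `Z` or has a
descendant in `Z`, and every interior non-converging node is not in `Z`. -/
def ActivatedBy (T : Trail V E) (Z : Set V) : Prop :=
  ∀ i, 0 < i → i < T.len →
    (T.ConvAt i → (T.f i ∈ Z ∨ ∃ d ∈ Z, Desc E (T.f i) d)) ∧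
    (¬ T.ConvAt i → T.f i ∉ Z)

/-- The trail has a chord: an arc of `E` between two non-consecutive nodes. -/
def HasChord (T : Trail V E) : Prop :=
  ∃ i j, i + 1 < j ∧ j ≤ T.len ∧ (E (T.f i) (T.f j) ∨ E (T.f j) (T.f i))

end Trail

/-- `E` contains an active cycle: a closed trail
`v ← x 0 ⇄ x 1 ⇄ ⋯ ⇄ x n ⇄ x (n+1) → v` (so `w = x 0` and `z = x (n+1)` are
distinct parents of `v`), with `n ≥ 1`, such that the trail
`x 0 ⇄ ⋯ ⇄ x (n+1)` has no converging connection and the closed trail has no chords. -/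
def HasActiveCycle {V : Type*} (E : V → V → Prop) : Prop :=
  ∃ (v : V) (n : ℕ) (x : ℕ → V),
    1 ≤ n ∧
    E (x 0) v ∧ E (x (n + 1)) v ∧
    (∀ i, i ≤ n + 1 → x i ≠ v) ∧
    (∀ i, i ≤ n + 1 → ∀ j, j ≤ n + 1 → x i = x j → i = j) ∧
    (∀ i, i < n + 1 → E (x i) (x (i + 1)) ∨ E (x (i + 1)) (x i)) ∧
    (∀ i, 0 < i → i < n + 1 → ¬ (E (x (i - 1)) (x i) ∧ E (x (i + 1)) (x i))) ∧
    (∀ i j, i + 1 < j → j ≤ n + 1 → ¬ (i = 0 ∧ j = n + 1) →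
      ¬ E (x i) (x j) ∧ ¬ E (x j) (x i)) ∧
    (∀ i, 1 ≤ i → i ≤ n → ¬ E v (x i) ∧ ¬ E (x i) v)

/-- A descendant path from `c` to `Z` with `n` intermediate nodes:
`c = d 0 → d 1 → ⋯ → d n → d (n+1) ∈ Z`, with `d j ∉ Z` for all `j ≤ n`. -/
def IsDescPath {V : Type*} (E : V → V → Prop) (Z : Set V) (c : V) (d : ℕ → V) (n : ℕ) :
    Prop :=
  d 0 = c ∧ d (n + 1) ∈ Z ∧ (∀ j, j ≤ n → d j ∉ Z) ∧ (∀ j, j ≤ n → E (d j) (d (j + 1)))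

/-- `n_Z(c)`: the least number of intermediate nodes of a descendant path from `c` to `Z`
(this is `0` when `c ∈ Z`, since then no descendant path exists and `sInf ∅ = 0`). -/
noncomputable def nZ {V : Type*} (E : V → V → Prop) (Z : Set V) (c : V) : ℕ :=
  sInf {n | ∃ d : ℕ → V, IsDescPath E Z c d n}

namespace Trail

variable {V : Type*} {E : V → V → Prop}

/-- The set of (interior) indices of `T` carrying a converging connection. -/
noncomputable def convIdx (T : Trail V E) : Finset ℕ :=
  (Finset.Ioo 0 T.len).filter fun i => T.ConvAt i

/-- The weight vector `(|{c₁,…,c_C} \ Z|, C, Σᵢ n_Z(i), Σᵢ n_t(i))` of a trail,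
whose lexicographic comparison induces the order `<_TRAIL`.  (The total length
of the subtrails, `Σᵢ n_t(i)`, equals `len - 1 - C`.) -/
noncomputable def weight (T : Trail V E) (Z : Set V) : ℕ × ℕ × ℕ × ℕ :=
  ((T.convIdx.filter fun i => T.f i ∉ Z).card,
   T.convIdx.card,
   ∑ i ∈ T.convIdx, nZ E Z (T.f i),
   T.len - 1 - T.convIdx.card)

end Trail

/-- Strict lexicographic order on `ℕ × ℕ × ℕ × ℕ`. -/
def LexLt4 (a b : ℕ × ℕ × ℕ × ℕ) : Prop :=
  a.1 < b.1 ∨ (a.1 = b.1 ∧ (a.2.1 < b.2.1 ∨ (a.2.1 = b.2.1 ∧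
    (a.2.2.1 < b.2.2.1 ∨ (a.2.2.1 = b.2.2.1 ∧ a.2.2.2 < b.2.2.2)))))

/-- `T ∈ TRAILS(X, Y, Z)`: `T` is a trail from a node of `X` to a node of `Y`
activated by `Z`. -/
def InTRAILS {V : Type*} {E : V → V → Prop} (T : Trail V E) (X Y Z : Set V) : Prop :=
  T.f 0 ∈ X ∧ T.f T.len ∈ Y ∧ T.ActivatedBy Z

/-- `T` is a minimal element of `TRAILS(X, Y, Z)` with respect to `<_TRAIL`. -/
def MinimalTrail {V : Type*} {E : V → V → Prop} (T : Trail V E) (X Y Z : Set V) : Prop :=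
  InTRAILS T X Y Z ∧
    ∀ T' : Trail V E, InTRAILS T' X Y Z → ¬ LexLt4 (T'.weight Z) (T.weight Z)

/-- `K` has local relationships: whenever two nodes of `K` are joined by a trail with
no converging connection all of whose interior nodes avoid `K`, they are adjacent. -/
def LocalRel {V : Type*} (E : V → V → Prop) (K : Set V) : Prop :=
  ∀ T : Trail V E, 1 ≤ T.len → T.f 0 ∈ K → T.f T.len ∈ K →
    (∀ i, 0 < i → i < T.len → T.f i ∉ K) →
    (∀ i, 0 < i → i < T.len → ¬ T.ConvAt i) →
    E (T.f 0) (T.f T.len) ∨ E (T.f T.len) (T.f 0)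

/-- `S` d-separates `A` and `B`: every trail from a node of `A` to a node of `B`
is blocked by (i.e. not activated by) `S`. -/
def DSep {V : Type*} (E : V → V → Prop) (A B S : Set V) : Prop :=
  ∀ T : Trail V E, T.f 0 ∈ A → T.f T.len ∈ B → ¬ T.ActivatedBy S

/-- `S` is connected: any two distinct nodes of `S` are joined by a trail all of
whose nodes lie in `S`. -/
def ConnectedIn {V : Type*} (E : V → V → Prop) (S : Set V) : Prop :=
  ∀ v1 ∈ S, ∀ v2 ∈ S, v1 ≠ v2 → ∃ T : Trail V E,
    T.f 0 = v1 ∧ T.f T.len = v2 ∧ ∀ i, i ≤ T.len → T.f i ∈ S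

namespace Trail

variable {V : Type*} {E : V → V → Prop}

/-- The index map that jumps from `a` directly to `a + 1 + s`. -/
def skip (a s k : ℕ) : ℕ := if k ≤ a then k else k + s

theorem skip_of_le {a s k : ℕ} (h : k ≤ a) : skip a s k = k := if_pos h

theorem skip_of_lt {a s k : ℕ} (h : a < k) : skip a s k = k + s := if_neg h.not_ge

theorem skip_injective (a s : ℕ) : Function.Injective (skip a s) := by
  intro i j h
  unfold skip at h
  split_ifs at h <;> omega

/-- The trail obtained from `T` by deleting the `s` nodes following index `a`, when the nodes
at indices `a` and `a + 1 + s` are joined by an arc. -/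
def shortcut (T : Trail V E) (a s : ℕ) (hlt : a + 1 + s ≤ T.len)
    (h : E (T.f (a + 1 + s)) (T.f a)) : Trail V E where
  len := T.len - s
  f k := T.f (skip a s k)
  arcs k hk := by
    rcases lt_trichotomy k a with hka | rfl | hka
    · rw [skip_of_le hka.le, skip_of_le hka]
      exact T.arcs k (by omega)
    · rw [skip_of_le le_rfl, skip_of_lt (Nat.lt_succ_self k)]
      exact Or.inr h
    · rw [skip_of_lt hka, skip_of_lt (by omega), Nat.add_right_comm]
      exact T.arcs (k + s) (by omega)
  inj i hi j hj hij := by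
    refine skip_injective a s (T.inj _ ?_ _ ?_ hij)
    · unfold skip; split_ifs <;> omega
    · unfold skip; split_ifs <;> omega

variable {T : Trail V E} {a s : ℕ} {hlt : a + 1 + s ≤ T.len} {h : E (T.f (a + 1 + s)) (T.f a)}

/-- Away from the tail of the new arc, a shortcut starting at a converging node keeps
the converging connections. -/
theorem convAt_shortcut_iff (ha : T.ConvAt a) {k : ℕ} (hk : k ≠ a + 1) :
    (T.shortcut a s hlt h).ConvAt k ↔ T.ConvAt (skip a s k) := by
  rcases lt_trichotomy k a with hka | rfl | hka
  · simp only [ConvAt, shortcut, skip_of_le hka.le, skip_of_le (show k + 1 ≤ a from hka),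
      skip_of_le (show k - 1 ≤ a by omega)]
    constructor
    · rintro ⟨h1, h2, h3⟩
      exact ⟨h1, by omega, h3⟩
    · rintro ⟨h1, h2, h3⟩
      exact ⟨h1, by omega, h3⟩
  · rw [skip_of_le le_rfl]
    refine iff_of_true ⟨ha.1, show k < T.len - s by omega, ?_⟩ ha
    simp only [shortcut, skip_of_le le_rfl, skip_of_le (show k - 1 ≤ k by omega),
      skip_of_lt (Nat.lt_succ_self k)]
    exact ⟨ha.2.2.1, h⟩
  · simp only [ConvAt, shortcut, skip_of_lt hka, skip_of_lt (show a < k + 1 by omega),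
      skip_of_lt (show a < k - 1 by omega), show k - 1 + s = k + s - 1 by omega,
      Nat.add_right_comm k 1 s]
    constructor
    · rintro ⟨h1, h2, h3⟩
      exact ⟨by omega, by omega, h3⟩
    · rintro ⟨h1, h2, h3⟩
      exact ⟨by omega, by omega, h3⟩

theorem not_convAt_shortcut (hdag : IsDAG E) : ¬ (T.shortcut a s hlt h).ConvAt (a + 1) := by
  rintro ⟨-, -, h1, -⟩
  simp only [shortcut, Nat.add_sub_cancel, skip_of_le le_rfl,
    skip_of_lt (Nat.lt_succ_self a)] at h1
  exact hdag _ (.tail (.single h) h1)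

theorem activatedBy_shortcut (hdag : IsDAG E) {Z : Set V} (hT : T.ActivatedBy Z)
    (ha : T.ConvAt a) (hb : T.f (a + 1 + s) ∉ Z) :
    (T.shortcut a s hlt h).ActivatedBy Z := by
  intro k hk0 hk
  by_cases hka : k = a + 1
  · subst hka
    refine ⟨fun hc => absurd hc (not_convAt_shortcut hdag), fun _ => ?_⟩
    simpa only [shortcut, skip_of_lt (Nat.lt_succ_self a)] using hb
  · rw [convAt_shortcut_iff ha hka]
    have hk' : k < T.len - s := hk
    refine hT (skip a s k) ?_ ?_
    · unfold skip; split_ifs <;> omega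
    · unfold skip; split_ifs <;> omega

/-- Shortcutting from a converging node to a converging node outside `Z` lowers the number of
converging nodes outside `Z`. -/
theorem card_convIdx_shortcut_lt (hdag : IsDAG E) {Z : Set V}
    (ha : T.ConvAt a) (hb : T.ConvAt (a + 1 + s)) (hbZ : T.f (a + 1 + s) ∉ Z) :
    ((T.shortcut a s hlt h).convIdx.filter fun i => (T.shortcut a s hlt h).f i ∉ Z).card <
      (T.convIdx.filter fun i => T.f i ∉ Z).card := by
  have mem_iff : ∀ (S : Trail V E) (k : ℕ),
      k ∈ S.convIdx.filter (fun i => S.f i ∉ Z) ↔ S.ConvAt k ∧ S.f k ∉ Z := by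
    intro S k
    simp only [convIdx, Finset.mem_filter, Finset.mem_Ioo, and_congr_left_iff,
      and_iff_right_iff_imp]
    exact fun _ hc => ⟨hc.1, hc.2.1⟩
  rw [← Finset.card_image_of_injective _ (skip_injective a s)]
  refine Finset.card_lt_card (Finset.ssubset_iff_of_subset ?_ |>.2 ⟨a + 1 + s, ?_, ?_⟩)
  · intro j hj
    obtain ⟨k, hk, rfl⟩ := Finset.mem_image.1 hj
    obtain ⟨hc, hZ⟩ := (mem_iff _ _).1 hk
    have hka : k ≠ a + 1 := by
      rintro rfl
      exact not_convAt_shortcut hdag hc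
    exact (mem_iff _ _).2 ⟨(convAt_shortcut_iff ha hka).1 hc, hZ⟩
  · exact (mem_iff _ _).2 ⟨hb, hbZ⟩
  · intro hj
    obtain ⟨k, hk, hkb⟩ := Finset.mem_image.1 hj
    obtain rfl : k = a + 1 :=
      skip_injective a s (hkb.trans (skip_of_lt (Nat.lt_succ_self a)).symm)
    exact not_convAt_shortcut hdag ((mem_iff _ _).1 hk).1

end Trail

/-- If `Y ∪ Z` has local relationships, the first converging node `c₁`
of a minimal trail of `TRAILS(X,Y,Z)` is in `Z`, and every consecutive pair of
converging nodes satisfies `cᵢ₊₁ → cᵢ ∈ E`, then every converging node belongs to `Z`. -/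
theorem minimal_trail_backward_chain_all_in_Z
    {V : Type*} [Fintype V] (E : V → V → Prop) (hdag : IsDAG E)
    (hnac : ¬ HasActiveCycle E) (X Y Z : Set V)
    (hXY : Disjoint X Y) (hXZ : Disjoint X Z) (hYZ : Disjoint Y Z)
    (hne : ∃ T₀ : Trail V E, InTRAILS T₀ X Y Z)
    (T : Trail V E) (hT : MinimalTrail T X Y Z)
    (hlocal : LocalRel E (Y ∪ Z))
    (c1 : ℕ) (hc1 : T.ConvAt c1) (hc1min : ∀ i, T.ConvAt i → c1 ≤ i)
    (hc1Z : T.f c1 ∈ Z)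
    (harc : ∀ a b, T.ConvAt a → T.ConvAt b → a < b →
      (∀ i, a < i → i < b → ¬ T.ConvAt i) → E (T.f b) (T.f a)) :
    ∀ i, T.ConvAt i → T.f i ∈ Z := by
  intro b
  induction b using Nat.strong_induction_on with
  | _ b ih =>
    intro hb
    rcases (hc1min b hb).eq_or_lt with rfl | hlt
    · exact hc1Z
    by_contra hbZ
    let S := (Finset.range b).filter fun i => T.ConvAt i
    have mem_S : ∀ i, i ∈ S ↔ i < b ∧ T.ConvAt i := fun i => by simp [S]
    obtain ⟨a, haS, hmax⟩ := S.exists_max_image id ⟨c1, (mem_S c1).2 ⟨hlt, hc1⟩⟩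
    obtain ⟨hab, ha⟩ := (mem_S a).1 haS
    have hE : E (T.f b) (T.f a) := harc a b ha hb hab fun i hai hib hi =>
      hai.not_ge (hmax i ((mem_S i).2 ⟨hib, hi⟩))
    obtain ⟨s, rfl⟩ := Nat.exists_eq_add_of_le (show a + 1 ≤ b from hab)
    obtain ⟨hX, hY, hact⟩ := hT.1
    refine hT.2 (T.shortcut a s hb.2.1.le hE)
      ⟨?_, ?_, Trail.activatedBy_shortcut hdag hact ha hbZ⟩
      (Or.inl (Trail.card_convIdx_shortcut_lt hdag ha hb hbZ))
    · simpa only [Trail.shortcut, Trail.skip_of_le (Nat.zero_le a)] using hX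
    · have hlen := hb.2.1
      simpa only [Trail.shortcut, Trail.skip_of_lt (show a < T.len - s by omega),
        Nat.sub_add_cancel (show s ≤ T.len by omega)] using hY
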